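/- (Corollary 1, equation (17)) If u_2^† R u_3 ≠ 0, then exp(j·ε_rx,K) = (u_2^† R u_2) / (u_2^† R u_3). -/

import Mathlib

open scoped BigOperators

/-- Steering vector `a(ε) ∈ ℂ^{n+1}` with entries `exp(j·i·ε)`, `i = 0,…,n`. -/
noncomputable def steer (n : ℕ) (ε : ℝ) : Fin (n + 1) → ℂ :=
  fun i => Complex.exp (Complex.I * ((i : ℕ) : ℂ) * (ε : ℂ))

/-- The vector `E(η_1,…,η_m) ∈ ℂ^{m+1}` defined recursively by
`E(η_1) = (1, −exp(j·η_1))` and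
`E(η_1,…,η_p) = (E(η_1,…,η_{p−1}), 0) − exp(j·η_p)·(0, E(η_1,…,η_{p−1}))`
(with base case `E() = (1)`, which reproduces the stated base case at `m = 1`). -/
noncomputable def Evec : (m : ℕ) → (Fin m → ℝ) → (Fin (m + 1) → ℂ)
  | 0, _ => fun _ => 1
  | m + 1, η => fun i =>
      Fin.snoc (α := fun _ => ℂ) (Evec m fun j => η j.castSucc) 0 i -
        Complex.exp (Complex.I * (η (Fin.last m) : ℂ)) *
          Fin.cons (α := fun _ => ℂ) 0 (Evec m fun j => η j.castSucc) i

/-- The cyclic down-shift matrix on `ℂ^{n+1}`: `(Lv)_0 = v_n`, `(Lv)_i = v_{i−1}` for `i ≥ 1`. -/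
def Lmat (n : ℕ) : Matrix (Fin (n + 1)) (Fin (n + 1)) ℂ :=
  Matrix.of fun i l => if l = i - 1 then 1 else 0

/-- Kronecker product of vectors: `(v ⊗ w)_{(i,l)} = v_i · w_l`. -/
def kron {a b : Type*} (v : a → ℂ) (w : b → ℂ) : a × b → ℂ :=
  fun p => v p.1 * w p.2

/-- `x^† y = Σ_i conj(x_i) · y_i`. -/
noncomputable def ip {n : Type*} [Fintype n] (x y : n → ℂ) : ℂ :=
  ∑ i, (starRingEnd ℂ) (x i) * y i

/-- `x^† M y = Σ_{i,l} conj(x_i) · M_{i,l} · y_l`. -/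
noncomputable def qf {n : Type*} [Fintype n] (x : n → ℂ) (M : Matrix n n ℂ) (y : n → ℂ) : ℂ :=
  ∑ i, ∑ l, (starRingEnd ℂ) (x i) * M i l * y l

/-- `E(η_1,…,η_Kp) ∈ ℂ^{Kp+1}` padded with a trailing zero, giving a vector in `ℂ^{Kp+2}`. -/
noncomputable def Epad (Kp : ℕ) (η : Fin Kp → ℝ) : Fin (Kp + 2) → ℂ :=
  Fin.snoc (Evec Kp η) 0

/-- `u_0 = Ẽ_tx ⊗ Ẽ_rx`. -/
noncomputable def u0 (Kp : ℕ) (ηt ηr : Fin Kp → ℝ) : Fin (Kp + 2) × Fin (Kp + 2) → ℂ :=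
  kron (Epad Kp ηt) (Epad Kp ηr)

/-- `u_1 = Ẽ_tx ⊗ (L·Ẽ_rx)`. -/
noncomputable def u1 (Kp : ℕ) (ηt ηr : Fin Kp → ℝ) : Fin (Kp + 2) × Fin (Kp + 2) → ℂ :=
  kron (Epad Kp ηt) ((Lmat (Kp + 1)).mulVec (Epad Kp ηr))

/-- `u_2 = (L·Ẽ_tx) ⊗ Ẽ_rx`. -/
noncomputable def u2 (Kp : ℕ) (ηt ηr : Fin Kp → ℝ) : Fin (Kp + 2) × Fin (Kp + 2) → ℂ :=
  kron ((Lmat (Kp + 1)).mulVec (Epad Kp ηt)) (Epad Kp ηr)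

/-- `u_3 = (L·Ẽ_tx) ⊗ (L·Ẽ_rx)`. -/
noncomputable def u3 (Kp : ℕ) (ηt ηr : Fin Kp → ℝ) : Fin (Kp + 2) × Fin (Kp + 2) → ℂ :=
  kron ((Lmat (Kp + 1)).mulVec (Epad Kp ηt)) ((Lmat (Kp + 1)).mulVec (Epad Kp ηr))

/-- The noiseless auto-correlation matrix `R = Σ_{k=1}^K σ_k² A_k A_k^†`, where
`A_k = a(ε_tx,k) ⊗ a(ε_rx,k)` and `σsq k` is the power `σ_k²`. -/
noncomputable def Rmat (K : ℕ) (εtx εrx σsq : Fin K → ℝ) :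
    Matrix (Fin (K + 1) × Fin (K + 1)) (Fin (K + 1) × Fin (K + 1)) ℂ :=
  Matrix.of fun p q => ∑ k, (σsq k : ℂ) *
    kron (steer K (εtx k)) (steer K (εrx k)) p *
    (starRingEnd ℂ) (kron (steer K (εtx k)) (steer K (εrx k)) q)

/-- The rank-one matrix `R_ε = a(ε) a(ε)^† ∈ ℂ^{(Kp+2)×(Kp+2)}`. -/
noncomputable def Rsingle (Kp : ℕ) (ε : ℝ) : Matrix (Fin (Kp + 2)) (Fin (Kp + 2)) ℂ :=
  Matrix.of fun i l => steer (Kp + 1) ε i * (starRingEnd ℂ) (steer (Kp + 1) ε l)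

/-- The iDEA cost `Q_tx(φ) = (u_1 − exp(j·φ)·u_3)^† R (u_1 − exp(j·φ)·u_3)`. -/
noncomputable def Qcost (Kp : ℕ) (εtx εrx σsq : Fin (Kp + 1) → ℝ)
    (ηt ηr : Fin Kp → ℝ) (φ : ℝ) : ℂ :=
  qf (u1 Kp ηt ηr - Complex.exp (Complex.I * (φ : ℂ)) • u3 Kp ηt ηr)
    (Rmat (Kp + 1) εtx εrx σsq)
    (u1 Kp ηt ηr - Complex.exp (Complex.I * (φ : ℂ)) • u3 Kp ηt ηr)

/-- The closed-form value `4^{2K−1} · Σ_k σ_k² sin²((ε_tx,k − φ)/2) ∏_m sin²((ε_tx,k − ε̂_tx,m)/2)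
∏_n sin²((ε_rx,k − ε̂_rx,n)/2)` (here `K = Kp + 1`, so `2K − 1 = 2·Kp + 1`). -/
noncomputable def Ssum (Kp : ℕ) (εtx εrx σsq : Fin (Kp + 1) → ℝ)
    (ηt ηr : Fin Kp → ℝ) (φ : ℝ) : ℝ :=
  (4 : ℝ) ^ (2 * Kp + 1) * ∑ k, σsq k * Real.sin ((εtx k - φ) / 2) ^ 2 *
    (∏ m, Real.sin ((εtx k - ηt m) / 2) ^ 2) *
    (∏ n, Real.sin ((εrx k - ηr n) / 2) ^ 2)

/-- The `k = K` term of `Ssum`, i.e. the lower bound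
`4^{2K−1} · σ_K² sin²((ε_tx,K − φ)/2) ∏_m sin²((ε_tx,K − ε̂_tx,m)/2) ∏_n sin²((ε_rx,K − ε̂_rx,n)/2)`. -/
noncomputable def Slb (Kp : ℕ) (εtx εrx σsq : Fin (Kp + 1) → ℝ)
    (ηt ηr : Fin Kp → ℝ) (φ : ℝ) : ℝ :=
  (4 : ℝ) ^ (2 * Kp + 1) * σsq (Fin.last Kp) *
    Real.sin ((εtx (Fin.last Kp) - φ) / 2) ^ 2 *
    (∏ m, Real.sin ((εtx (Fin.last Kp) - ηt m) / 2) ^ 2) *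
    (∏ n, Real.sin ((εrx (Fin.last Kp) - ηr n) / 2) ^ 2)

/-!
Pairing `v` with `a(ε)` evaluates the polynomial with coefficients `v` at `exp(-jε)`, and the
polynomial of `E(η_1,…,η_m)` is `∏ i, (1 - exp(j η_i) X)`. So `E(ε_rx,1,…,ε_rx,K)` is orthogonal to
every `a(ε_rx,k)`, and `R (w ⊗ E(ε_rx,1,…,ε_rx,K)) = 0` for every `w`. The last step of the recursion
is `E(ε_rx,1,…,ε_rx,K) = Ẽ_rx - exp(j ε_rx,K) L Ẽ_rx`; with `w = L Ẽ_tx` this gives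
`R u_2 = exp(j ε_rx,K) R u_3`.
-/

section

open scoped Matrix

theorem ip_eq_dotProduct {n : Type*} [Fintype n] (x y : n → ℂ) : ip x y = star x ⬝ᵥ y :=
  rfl

theorem qf_eq_dotProduct_mulVec {n : Type*} [Fintype n] (x : n → ℂ) (M : Matrix n n ℂ)
    (y : n → ℂ) : qf x M y = star x ⬝ᵥ M *ᵥ y := by
  simp only [qf, dotProduct, Matrix.mulVec, Finset.mul_sum, mul_assoc, Pi.star_apply,
    starRingEnd_apply]

theorem kron_sub_right {a b : Type*} (v : a → ℂ) (w₁ w₂ : b → ℂ) :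
    kron v (w₁ - w₂) = kron v w₁ - kron v w₂ :=
  funext fun _ => mul_sub _ _ _

theorem kron_smul_right {a b : Type*} (v : a → ℂ) (c : ℂ) (w : b → ℂ) :
    kron v (c • w) = c • kron v w :=
  funext fun _ => mul_left_comm _ _ _

theorem ip_kron_kron {a b : Type*} [Fintype a] [Fintype b] (v x : a → ℂ) (w y : b → ℂ) :
    ip (kron v w) (kron x y) = ip v x * ip w y := by
  simp only [ip, kron, Fintype.sum_prod_type, Finset.sum_mul_sum, map_mul, mul_mul_mul_comm]

theorem ip_steer (n : ℕ) (ε : ℝ) (v : Fin (n + 1) → ℂ) :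
    ip (steer n ε) v = ∑ i : Fin (n + 1), Complex.exp (-(Complex.I * ε)) ^ (i : ℕ) * v i := by
  have conj_steer (i : Fin (n + 1)) :
      (starRingEnd ℂ) (steer n ε i) = Complex.exp (-(Complex.I * ε)) ^ (i : ℕ) := by
    rw [steer, ← Complex.exp_conj, ← Complex.exp_nat_mul]
    congr 1
    simp only [map_mul, Complex.conj_I, Complex.conj_ofReal, Complex.conj_natCast]
    ring
  simp only [ip, conj_steer]

theorem ip_steer_snoc_zero (n : ℕ) (ε : ℝ) (v : Fin (n + 1) → ℂ) :
    ip (steer (n + 1) ε) (Fin.snoc (α := fun _ => ℂ) v 0) = ip (steer n ε) v := by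
  simp [ip_steer, Fin.sum_univ_castSucc (n := n + 1)]

theorem ip_steer_cons_zero (n : ℕ) (ε : ℝ) (v : Fin (n + 1) → ℂ) :
    ip (steer (n + 1) ε) (Fin.cons (α := fun _ => ℂ) 0 v) =
      Complex.exp (-(Complex.I * ε)) * ip (steer n ε) v := by
  simp [ip_steer, Fin.sum_univ_succ (n := n + 1), Finset.mul_sum, pow_succ', mul_assoc]

theorem Lmat_mulVec_apply (n : ℕ) (v : Fin (n + 1) → ℂ) (i : Fin (n + 1)) :
    (Lmat n *ᵥ v) i = v (i - 1) := by
  simp [Matrix.mulVec, dotProduct, Lmat]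

theorem Lmat_mulVec_snoc_zero (n : ℕ) (v : Fin (n + 1) → ℂ) :
    Lmat (n + 1) *ᵥ Fin.snoc (α := fun _ => ℂ) v 0 = Fin.cons (α := fun _ => ℂ) 0 v := by
  funext i
  rw [Lmat_mulVec_apply]
  cases i using Fin.cases with
  | zero =>
    have zero_sub_one : (0 : Fin (n + 2)) - 1 = Fin.last (n + 1) := by
      rw [sub_eq_iff_eq_add, Fin.last_add_one]
    rw [zero_sub_one, Fin.snoc_last, Fin.cons_zero]
  | succ i =>
    have succ_sub_one : i.succ - 1 = i.castSucc := by rw [sub_eq_iff_eq_add, Fin.coeSucc_eq_succ]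
    rw [succ_sub_one, Fin.snoc_castSucc, Fin.cons_succ]

theorem Evec_succ (m : ℕ) (η : Fin (m + 1) → ℝ) :
    Evec (m + 1) η = Epad m (fun i => η i.castSucc) -
      Complex.exp (Complex.I * η (Fin.last m)) •
        Lmat (m + 1) *ᵥ Epad m (fun i => η i.castSucc) := by
  rw [Epad, Lmat_mulVec_snoc_zero]
  rfl

theorem ip_steer_Evec (m : ℕ) (ε : ℝ) (η : Fin m → ℝ) :
    ip (steer m ε) (Evec m η) =
      ∏ i, (1 - Complex.exp (Complex.I * η i) * Complex.exp (-(Complex.I * ε))) := by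
  induction m with
  | zero => simp [ip_steer, Evec]
  | succ m ih =>
    rw [Evec_succ, Epad, Lmat_mulVec_snoc_zero, ip_eq_dotProduct, dotProduct_sub,
      dotProduct_smul, ← ip_eq_dotProduct, ← ip_eq_dotProduct, ip_steer_snoc_zero,
      ip_steer_cons_zero, ih, Fin.prod_univ_castSucc, smul_eq_mul]
    ring

theorem ip_steer_Evec_self (m : ℕ) (η : Fin m → ℝ) (k : Fin m) :
    ip (steer m (η k)) (Evec m η) = 0 := by
  rw [ip_steer_Evec]
  refine Finset.prod_eq_zero (Finset.mem_univ k) ?_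
  rw [← Complex.exp_add, add_neg_cancel, Complex.exp_zero, sub_self]

theorem Rmat_mulVec (K : ℕ) (εtx εrx σsq : Fin K → ℝ) (y : Fin (K + 1) × Fin (K + 1) → ℂ) :
    Rmat K εtx εrx σsq *ᵥ y =
      ∑ k, ((σsq k : ℂ) * ip (kron (steer K (εtx k)) (steer K (εrx k))) y) •
        kron (steer K (εtx k)) (steer K (εrx k)) := by
  funext p
  simp only [Matrix.mulVec, dotProduct, Rmat, Matrix.of_apply, Finset.sum_mul, Finset.sum_apply,
    Pi.smul_apply, smul_eq_mul, ip, Finset.mul_sum]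
  rw [Finset.sum_comm]
  refine Finset.sum_congr rfl fun k _ => Finset.sum_congr rfl fun q _ => ?_
  ring

theorem Rmat_mulVec_kron_Evec (K : ℕ) (εtx εrx σsq : Fin K → ℝ) (w : Fin (K + 1) → ℂ) :
    Rmat K εtx εrx σsq *ᵥ kron w (Evec K εrx) = 0 := by
  simp only [Rmat_mulVec, ip_kron_kron, ip_steer_Evec_self, mul_zero, zero_smul,
    Finset.sum_const_zero]

theorem statement10_general (Kp : ℕ) (εtx εrx σsq : Fin (Kp + 1) → ℝ)
    (x : Fin (Kp + 2) × Fin (Kp + 2) → ℂ) (w : Fin (Kp + 2) → ℂ) :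
    Complex.exp (Complex.I * εrx (Fin.last Kp)) *
        qf x (Rmat (Kp + 1) εtx εrx σsq)
          (kron w (Lmat (Kp + 1) *ᵥ Epad Kp fun i => εrx i.castSucc)) =
      qf x (Rmat (Kp + 1) εtx εrx σsq) (kron w (Epad Kp fun i => εrx i.castSucc)) := by
  have annihilated := Rmat_mulVec_kron_Evec (Kp + 1) εtx εrx σsq w
  rw [Evec_succ, kron_sub_right, kron_smul_right, Matrix.mulVec_sub, Matrix.mulVec_smul,
    sub_eq_zero] at annihilated
  rw [qf_eq_dotProduct_mulVec, qf_eq_dotProduct_mulVec, annihilated, dotProduct_smul, smul_eq_mul]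

end

/-- Corollary 1, eq. (17): if u_2^† R u_3 ≠ 0, then
exp(j·ε_rx,K) = (u_2^† R u_2) / (u_2^† R u_3). -/
theorem statement10 (Kp : ℕ) (hKp : 1 ≤ Kp) (εtx εrx : Fin (Kp + 1) → ℝ)
    (σsq : Fin (Kp + 1) → ℝ) (hσ : ∀ k, 0 < σsq k)
    (hden : qf (u2 Kp (fun i => εtx i.castSucc) (fun i => εrx i.castSucc)) (Rmat (Kp + 1) εtx εrx σsq)
        (u3 Kp (fun i => εtx i.castSucc) (fun i => εrx i.castSucc)) ≠ 0) :
    Complex.exp (Complex.I * (εrx (Fin.last Kp) : ℂ)) =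
      qf (u2 Kp (fun i => εtx i.castSucc) (fun i => εrx i.castSucc)) (Rmat (Kp + 1) εtx εrx σsq)
          (u2 Kp (fun i => εtx i.castSucc) (fun i => εrx i.castSucc)) /
        qf (u2 Kp (fun i => εtx i.castSucc) (fun i => εrx i.castSucc)) (Rmat (Kp + 1) εtx εrx σsq)
          (u3 Kp (fun i => εtx i.castSucc) (fun i => εrx i.castSucc)) := by
  rw [eq_div_iff hden]
  exact statement10_general Kp εtx εrx σsq _ _
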